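/- arXiv:1703.05112 — 2 statements merged into one kernel-verified Lean document; each statement's English description precedes it below -/
import Mathlib

section
/- (Weighted heat decay for constant coefficients) Let G* be a positive definite symmetric d×d real matrix, b > 0, and P = −div(G*∇) the associated nonnegative self-adjoint operator on L²(ℝ^d). Let s₁, s₂ ∈ [0, d/2] and κ > 1. Then there exists C ≥ 0 such that for all t ≥ 1, ‖⟨x⟩^{−κ s₁} e^{−tP/b} ⟨x⟩^{−κ s₂}‖_{L(L²(ℝ^d))} ≤ C t^{−(s₁+s₂)/2}. -/
open MeasureTheory

open Module FourierTransform
open scoped ContDiff SchwartzMap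

/-- The function `exp (-q)` has temperate growth if `q ≥ 0` does. -/
theorem Function.HasTemperateGrowth.exp_neg {E : Type*} [NormedAddCommGroup E] [NormedSpace ℝ E]
    {q : E → ℝ} (hq : q.HasTemperateGrowth) (hq0 : ∀ x, 0 ≤ q x) :
    (fun x ↦ Real.exp (-q x)).HasTemperateGrowth := by
  have ht : Set.range (fun x ↦ -q x) ⊆ Set.Iio (1 : ℝ) := by
    rintro - ⟨y, rfl⟩
    have := hq0 y
    simp only [Set.mem_Iio]
    linarith
  have hu : UniqueDiffOn ℝ (Set.Iio (1 : ℝ)) := isOpen_Iio.uniqueDiffOn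
  refine Function.HasTemperateGrowth.comp' (g := Real.exp) ht hu Real.contDiff_exp.contDiffOn (fun N ↦ ?_) hq.neg
  refine ⟨0, Real.exp 1, (Real.exp_pos 1).le, fun n _ x hx ↦ ?_⟩
  rw [norm_iteratedFDerivWithin_eq_norm_iteratedDerivWithin,
    iteratedDerivWithin_eq_iteratedDeriv hu Real.contDiff_exp.contDiffAt hx,
    iteratedDeriv_eq_iterate, Real.iter_deriv_exp]
  simpa using (Set.mem_Iio.1 hx).le

/-- The Cauchy–Schwarz inequality for nonnegative square-integrable functions. -/
theorem integral_mul_le_sqrt_mul_sqrt {α : Type*} [MeasurableSpace α] {μ : Measure α}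
    {f g : α → ℝ} (hf0 : ∀ x, 0 ≤ f x) (hg0 : ∀ x, 0 ≤ g x) (hf : MemLp f 2 μ)
    (hg : MemLp g 2 μ) :
    ∫ x, f x * g x ∂μ ≤ √(∫ x, f x ^ 2 ∂μ) * √(∫ x, g x ^ 2 ∂μ) := by
  have h := integral_mul_le_Lp_mul_Lq_of_nonneg Real.HolderConjugate.two_two
    (ae_of_all μ hf0) (ae_of_all μ hg0) (by simpa using hf) (by simpa using hg)
  simpa [Real.sqrt_eq_rpow] using h

/-- Interpolation between `L^∞` and `L^1` against a power of a weight. -/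
theorem rpow_mul_le_of_le {w F M a θ : ℝ} (hw : 0 ≤ w) (hF : 0 ≤ F) (hM : F ≤ M) (ha : 0 < a)
    (hθ0 : 0 ≤ θ) (hθ1 : θ ≤ 1) :
    w ^ θ * F ≤ a ^ (-θ) * (a * M * w + F) := by
  have h1 : F = F ^ θ * F ^ (1 - θ) := by
    rw [← Real.rpow_add' hF (by simp)]
    simp
  have haw : 0 ≤ a * M * w := by have := hF.trans hM; positivity
  calc w ^ θ * F = w ^ θ * (F ^ θ * F ^ (1 - θ)) := by rw [← h1]
    _ ≤ w ^ θ * (M ^ θ * F ^ (1 - θ)) := by gcongr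
    _ = a ^ (-θ) * ((a * M * w) ^ θ * F ^ (1 - θ)) := by
      rw [Real.mul_rpow (mul_nonneg ha.le (hF.trans hM)) hw, Real.mul_rpow ha.le (hF.trans hM),
        Real.rpow_neg ha.le]
      field_simp
    _ ≤ a ^ (-θ) * (θ * (a * M * w) + (1 - θ) * F) := by
      gcongr
      exact Real.geom_mean_le_arith_mean2_weighted hθ0 (by linarith) haw hF (by ring)
    _ ≤ a ^ (-θ) * (a * M * w + F) := by
      gcongr ?_ * (?_ + ?_)
      · exact mul_le_of_le_one_left haw hθ1
      · exact mul_le_of_le_one_left hF (by linarith)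

section HeatBound

variable {V : Type*} [NormedAddCommGroup V] [InnerProductSpace ℝ V] [FiniteDimensional ℝ V]
  [MeasurableSpace V] [BorelSpace V]

theorem SchwartzMap.integrable_norm_sq (f : 𝓢(V, ℂ)) : Integrable fun x ↦ ‖f x‖ ^ 2 :=
  (f.memLp 2).integrable_norm_pow two_ne_zero

theorem SchwartzMap.integral_norm_sq_fourierInv (f : 𝓢(V, ℂ)) :
    ∫ x, ‖(𝓕⁻ f) x‖ ^ 2 = ∫ x, ‖f x‖ ^ 2 := by
  simpa using (SchwartzMap.integral_norm_sq_fourier (𝓕⁻ f)).symm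

theorem integrable_exp_neg_mul_norm_sq {a : ℝ} (ha : 0 < a) :
    Integrable fun x : V ↦ Real.exp (-a * ‖x‖ ^ 2) := by
  refine Integrable.of_integral_ne_zero ?_
  rw [GaussianFourier.integral_rexp_neg_mul_sq_norm ha]
  have := Real.pi_pos
  positivity

theorem integrable_exp_neg_of_le {q : V → ℝ} (hq : Continuous q) {a : ℝ} (ha : 0 < a)
    (hqa : ∀ x, a * ‖x‖ ^ 2 ≤ q x) : Integrable fun x ↦ Real.exp (-q x) := by
  refine (integrable_exp_neg_mul_norm_sq ha).mono' (by fun_prop) (ae_of_all _ fun x ↦ ?_)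
  simpa using hqa x

theorem integral_exp_neg_le {q : V → ℝ} (hq : Continuous q) {a : ℝ} (ha : 0 < a)
    (hqa : ∀ x, a * ‖x‖ ^ 2 ≤ q x) :
    ∫ x, Real.exp (-q x) ≤ (Real.pi / a) ^ (finrank ℝ V / 2 : ℝ) := by
  rw [← GaussianFourier.integral_rexp_neg_mul_sq_norm ha]
  refine integral_mono (integrable_exp_neg_of_le hq ha hqa) (integrable_exp_neg_mul_norm_sq ha)
    fun x ↦ ?_
  simpa using hqa x

/-- The `L² → L^∞` bound for a multiplier dominated by a Gaussian. -/
theorem norm_sq_fourierInv_smulLeftCLM_exp_le {q : V → ℝ} (hq : q.HasTemperateGrowth) {a : ℝ}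
    (ha : 0 < a) (hqa : ∀ x, a * ‖x‖ ^ 2 ≤ q x) (v : 𝓢(V, ℂ)) (x : V) :
    ‖(𝓕⁻ (SchwartzMap.smulLeftCLM ℂ (fun η ↦ Real.exp (-q η)) v)) x‖ ^ 2 ≤
      (Real.pi / (2 * a)) ^ (finrank ℝ V / 2 : ℝ) * ∫ η, ‖v η‖ ^ 2 := by
  have hq0 : ∀ x, 0 ≤ q x := fun x ↦ (by positivity : 0 ≤ a * ‖x‖ ^ 2).trans (hqa x)
  have hqc : Continuous q := hq.1.continuous
  have hexp := hq.exp_neg hq0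
  have hsq : ∀ η, Real.exp (-q η) ^ 2 = Real.exp (-(2 * q η)) := fun η ↦ by
    rw [← Real.exp_nat_mul]; ring_nf
  have hqa2 : ∀ x, 2 * a * ‖x‖ ^ 2 ≤ 2 * q x := fun x ↦ by linarith [hqa x]
  have hmem : MemLp (fun η ↦ Real.exp (-q η)) 2 (volume : Measure V) := by
    rw [memLp_two_iff_integrable_sq (by fun_prop)]
    simp only [hsq]
    exact integrable_exp_neg_of_le (by fun_prop) (by positivity : 0 < 2 * a) hqa2
  have hle : ‖(𝓕⁻ (SchwartzMap.smulLeftCLM ℂ (fun η ↦ Real.exp (-q η)) v)) x‖ ≤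
      √(∫ η, Real.exp (-q η) ^ 2) * √(∫ η, ‖v η‖ ^ 2) := by
    rw [SchwartzMap.fourierInv_coe, Real.fourierInv_eq]
    refine (norm_integral_le_integral_norm _).trans ?_
    refine le_trans (le_of_eq ?_) (integral_mul_le_sqrt_mul_sqrt (fun _ ↦ (Real.exp_pos _).le)
      (fun _ ↦ norm_nonneg _) hmem (v.memLp 2).norm)
    refine integral_congr_ae (ae_of_all _ fun η ↦ ?_)
    simp only [Circle.norm_smul, SchwartzMap.smulLeftCLM_apply_apply hexp, norm_smul,
      Real.norm_of_nonneg (Real.exp_pos _).le]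
  calc _ ≤ (√(∫ η, Real.exp (-q η) ^ 2) * √(∫ η, ‖v η‖ ^ 2)) ^ 2 := by gcongr
    _ = (∫ η, Real.exp (-(2 * q η))) * ∫ η, ‖v η‖ ^ 2 := by
      rw [mul_pow, Real.sq_sqrt (by positivity), Real.sq_sqrt (by positivity)]
      simp only [hsq]
    _ ≤ _ := by
      gcongr
      exact integral_exp_neg_le (by fun_prop) (by positivity) hqa2

/-- The unweighted `L² → L²` bound for a nonpositive exponential multiplier. -/
theorem integral_norm_sq_fourierInv_smulLeftCLM_exp_le {q : V → ℝ} (hq : q.HasTemperateGrowth)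
    (hq0 : ∀ x, 0 ≤ q x) (v : 𝓢(V, ℂ)) :
    ∫ x, ‖(𝓕⁻ (SchwartzMap.smulLeftCLM ℂ (fun η ↦ Real.exp (-q η)) v)) x‖ ^ 2 ≤
      ∫ η, ‖v η‖ ^ 2 := by
  rw [SchwartzMap.integral_norm_sq_fourierInv]
  refine integral_mono (SchwartzMap.integrable_norm_sq _) v.integrable_norm_sq fun η ↦ ?_
  simp only [SchwartzMap.smulLeftCLM_apply_apply (hq.exp_neg hq0), norm_smul, mul_pow]
  refine mul_le_of_le_one_left (by positivity) (pow_le_one₀ (by positivity) ?_)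
  simpa [abs_of_pos (Real.exp_pos _)] using hq0 η

/-- The one-sided weighted decay estimate, in squared form. -/
theorem exists_integral_weight_mul_norm_sq_le {q : V → ℝ} (hq : q.HasTemperateGrowth) {c : ℝ}
    (hc : 0 < c) (hqc : ∀ x, c * ‖x‖ ^ 2 ≤ q x) {s κ : ℝ} (hs0 : 0 ≤ s)
    (hs1 : s ≤ finrank ℝ V / 2) (hκ : 1 < κ) :
    ∃ C : ℝ, 0 ≤ C ∧ ∀ τ : ℝ, 0 < τ → ∀ v : 𝓢(V, ℂ),
      ∫ x, (1 + ‖x‖ ^ 2) ^ (-(κ * s)) *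
        ‖(𝓕⁻ (SchwartzMap.smulLeftCLM ℂ (fun η ↦ Real.exp (-(τ / 2 * q η))) v)) x‖ ^ 2 ≤
        C * τ ^ (-s) * ∫ η, ‖v η‖ ^ 2 := by
  set d : ℝ := (finrank ℝ V : ℝ) with hd
  obtain ⟨θ, r, hθ0, hθ1, hr, hrθ, hθs⟩ : ∃ θ r : ℝ, 0 ≤ θ ∧ θ ≤ 1 ∧ d < r ∧
      r / 2 * θ = κ * s ∧ d / 2 * θ = s := by
    rcases (show 0 ≤ d from Nat.cast_nonneg _).eq_or_lt with h0 | hpos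
    · have : s = 0 := by linarith
      exact ⟨0, 1, le_rfl, zero_le_one, by linarith, by simp [this], by simp [this]⟩
    · refine ⟨2 * s / d, κ * d, by positivity, ?_, ?_, by field_simp, by field_simp⟩
      · rw [div_le_one hpos]; linarith
      · exact lt_mul_of_one_lt_left hpos hκ
  have hW := integrable_rpow_neg_one_add_norm_sq (E := V) (μ := volume) hr
  set W : V → ℝ := fun x ↦ (1 + ‖x‖ ^ 2) ^ (-r / 2) with hWdef
  have hW0 : ∀ x, 0 ≤ W x := fun x ↦ by positivity
  set K : ℝ := (Real.pi / c) ^ (d / 2) with hK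
  have hpi := Real.pi_pos
  have hK0 : 0 ≤ K := by positivity
  have hWint : 0 ≤ ∫ x, W x := integral_nonneg hW0
  refine ⟨K * (∫ x, W x) + 1, by positivity, fun τ hτ v ↦ ?_⟩
  set I : ℝ := ∫ η, ‖v η‖ ^ 2
  have hI0 : 0 ≤ I := by positivity
  have hq' : (fun η ↦ τ / 2 * q η).HasTemperateGrowth := by fun_prop
  have hqa : ∀ x, τ / 2 * c * ‖x‖ ^ 2 ≤ τ / 2 * q x := fun x ↦ by
    rw [mul_assoc]; gcongr; exact hqc x
  have hq0 : ∀ x, 0 ≤ τ / 2 * q x := fun x ↦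
    (by positivity : 0 ≤ τ / 2 * c * ‖x‖ ^ 2).trans (hqa x)
  have hsup := norm_sq_fourierInv_smulLeftCLM_exp_le hq' (by positivity) hqa v
  have hL2 := integral_norm_sq_fourierInv_smulLeftCLM_exp_le hq' hq0 v
  set f := 𝓕⁻ (SchwartzMap.smulLeftCLM ℂ (fun η ↦ Real.exp (-(τ / 2 * q η))) v)
  have hfint : Integrable fun x ↦ ‖f x‖ ^ 2 := f.integrable_norm_sq
  have hτd : 0 < τ ^ (d / 2) := by positivity
  have hM : τ ^ (d / 2) * ((Real.pi / (2 * (τ / 2 * c))) ^ (d / 2) * I) = K * I := by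
    rw [← mul_assoc, ← Real.mul_rpow hτ.le (by positivity), hK]
    congr 2
    field_simp
  have hpt : ∀ x, (1 + ‖x‖ ^ 2) ^ (-(κ * s)) * ‖f x‖ ^ 2 ≤
      τ ^ (-s) * (K * I * W x + ‖f x‖ ^ 2) := fun x ↦ by
    have h := rpow_mul_le_of_le (hW0 x) (sq_nonneg ‖f x‖) (hsup x) hτd hθ0 hθ1
    rw [hM] at h
    convert h using 2
    · rw [hWdef, ← Real.rpow_mul (by positivity), ← hrθ]
      ring_nf
    · rw [← Real.rpow_mul hτ.le, mul_neg, hθs]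
  calc _ ≤ ∫ x, τ ^ (-s) * (K * I * W x + ‖f x‖ ^ 2) :=
        integral_mono_of_nonneg (ae_of_all _ fun x ↦ by positivity)
          (((hW.const_mul _).add hfint).const_mul _) (ae_of_all _ hpt)
    _ = τ ^ (-s) * (K * I * (∫ x, W x) + ∫ x, ‖f x‖ ^ 2) := by
      rw [integral_const_mul, integral_add (hW.const_mul _) hfint, integral_const_mul]
    _ ≤ τ ^ (-s) * (K * I * (∫ x, W x) + I) := by gcongr
    _ = _ := by ring

/-- The dual weighted decay estimate: the weight is applied before the half-time multiplier. -/
theorem exists_integral_norm_sq_smulLeftCLM_fourier_le {q : V → ℝ} (hq : q.HasTemperateGrowth)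
    {c : ℝ} (hc : 0 < c) (hqc : ∀ x, c * ‖x‖ ^ 2 ≤ q x) {s κ : ℝ} (hs0 : 0 ≤ s)
    (hs1 : s ≤ finrank ℝ V / 2) (hκ : 1 < κ) :
    ∃ C : ℝ, 0 ≤ C ∧ ∀ τ : ℝ, 0 < τ → ∀ g : 𝓢(V, ℂ),
      ∫ η, ‖SchwartzMap.smulLeftCLM ℂ (fun η ↦ Real.exp (-(τ / 2 * q η)))
        (𝓕 (SchwartzMap.smulLeftCLM ℂ (fun y ↦ (1 + ‖y‖ ^ 2) ^ (-(κ * s) / 2)) g)) η‖ ^ 2 ≤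
        C * τ ^ (-s) * ∫ y, ‖g y‖ ^ 2 := by
  obtain ⟨C, hC0, hC⟩ := exists_integral_weight_mul_norm_sq_le hq hc hqc hs0 hs1 hκ
  refine ⟨C, hC0, fun τ hτ g ↦ ?_⟩
  have hq0 : ∀ x, 0 ≤ τ / 2 * q x := fun x ↦
    mul_nonneg (by positivity) ((by positivity : 0 ≤ c * ‖x‖ ^ 2).trans (hqc x))
  have hexp := (show (fun η ↦ τ / 2 * q η).HasTemperateGrowth by fun_prop).exp_neg hq0
  have hw := Function.hasTemperateGrowth_one_add_norm_sq_rpow V (-(κ * s) / 2)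
  set w : V → ℝ := fun y ↦ (1 + ‖y‖ ^ 2) ^ (-(κ * s) / 2) with hwdef
  have hw0 : ∀ x, 0 ≤ w x := fun x ↦ by positivity
  have hw2 : ∀ x, w x ^ 2 = (1 + ‖x‖ ^ 2) ^ (-(κ * s)) := fun x ↦ by
    rw [hwdef, ← Real.rpow_natCast, ← Real.rpow_mul (by positivity)]
    norm_num
  set m : V → ℝ := fun η ↦ Real.exp (-(τ / 2 * q η))
  set h := SchwartzMap.smulLeftCLM ℂ w g with hh
  set v := SchwartzMap.smulLeftCLM ℂ m (𝓕 h) with hv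
  set f := 𝓕⁻ (SchwartzMap.smulLeftCLM ℂ m v) with hf
  have hCv := hC τ hτ v
  set A : ℝ := ∫ η, ‖v η‖ ^ 2
  have hA0 : 0 ≤ A := by positivity
  have hpair : (A : ℂ) = ∫ x, inner ℂ (h x) (f x) := by
    have := SchwartzMap.integral_sesq_fourier_eq h (SchwartzMap.smulLeftCLM ℂ m v) (innerSL ℂ)
    simp only [innerSL_apply_apply] at this
    rw [← this, ← integral_complex_ofReal]
    refine integral_congr_ae (ae_of_all _ fun η ↦ ?_)
    simp only [hv, SchwartzMap.smulLeftCLM_apply_apply hexp, norm_smul]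
    rw [← Complex.coe_smul (m η) (m η • _), ← Complex.coe_smul, inner_smul_right,
      inner_smul_right, inner_self_eq_norm_sq_to_K]
    have : ‖m η‖ = m η := Real.norm_of_nonneg (Real.exp_pos _).le
    rw [this]
    push_cast
    simp
    ring
  have hwf : ∫ x, ‖SchwartzMap.smulLeftCLM ℂ w f x‖ ^ 2 ≤ C * τ ^ (-s) * A := by
    refine le_trans (le_of_eq ?_) hCv
    refine integral_congr_ae (ae_of_all _ fun x ↦ ?_)
    simp only [SchwartzMap.smulLeftCLM_apply_apply hw, norm_smul, mul_pow,
      Real.norm_of_nonneg (hw0 _), hw2]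
    rfl
  have hle : A ≤ √(∫ x, ‖g x‖ ^ 2) * √(C * τ ^ (-s) * A) := by
    calc A = ‖(A : ℂ)‖ := by rw [Complex.norm_of_nonneg hA0]
      _ ≤ ∫ x, ‖inner ℂ (h x) (f x)‖ := by rw [hpair]; exact norm_integral_le_integral_norm _
      _ = ∫ x, ‖g x‖ * ‖SchwartzMap.smulLeftCLM ℂ w f x‖ := by
        refine integral_congr_ae (ae_of_all _ fun x ↦ ?_)
        simp only [hh, SchwartzMap.smulLeftCLM_apply_apply hw, RCLike.inner_apply, norm_mul,
          norm_smul, RCLike.norm_conj]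
        ring
      _ ≤ √(∫ x, ‖g x‖ ^ 2) * √(∫ x, ‖SchwartzMap.smulLeftCLM ℂ w f x‖ ^ 2) :=
        integral_mul_le_sqrt_mul_sqrt (fun _ ↦ norm_nonneg _) (fun _ ↦ norm_nonneg _)
          (g.memLp 2).norm ((SchwartzMap.smulLeftCLM ℂ w f).memLp 2).norm
      _ ≤ _ := by gcongr
  rcases hA0.eq_or_lt with h0 | hpos
  · rw [← h0]; positivity
  · have hsq : A ^ 2 ≤ (∫ x, ‖g x‖ ^ 2) * (C * τ ^ (-s) * A) := by
      calc A ^ 2 ≤ (√(∫ x, ‖g x‖ ^ 2) * √(C * τ ^ (-s) * A)) ^ 2 := by gcongr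
        _ = _ := by rw [mul_pow, Real.sq_sqrt (by positivity), Real.sq_sqrt (by positivity)]
    refine le_of_mul_le_mul_right ?_ hpos
    linarith

/-- Two-sided weighted decay for the Fourier multiplier `exp (-τ q)`, `q` bounded below by a
positive multiple of `‖·‖ ^ 2`. -/
theorem exists_sqrt_integral_weight_mul_norm_sq_le {q : V → ℝ} (hq : q.HasTemperateGrowth)
    {c : ℝ} (hc : 0 < c) (hqc : ∀ x, c * ‖x‖ ^ 2 ≤ q x) {s₁ s₂ κ : ℝ}
    (hs₁ : s₁ ∈ Set.Icc (0 : ℝ) (finrank ℝ V / 2)) (hs₂ : s₂ ∈ Set.Icc (0 : ℝ) (finrank ℝ V / 2))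
    (hκ : 1 < κ) :
    ∃ C : ℝ, 0 ≤ C ∧ ∀ τ : ℝ, 0 < τ → ∀ g : 𝓢(V, ℂ),
      √(∫ x, (1 + ‖x‖ ^ 2) ^ (-(κ * s₁)) *
        ‖𝓕⁻ (fun η ↦ (Real.exp (-(τ * q η)) : ℂ) *
          𝓕 (fun y ↦ (((1 + ‖y‖ ^ 2) ^ (-(κ * s₂) / 2) : ℝ) : ℂ) * g y) η) x‖ ^ 2) ≤
        C * τ ^ (-(s₁ + s₂) / 2) * √(∫ y, ‖g y‖ ^ 2) := by
  obtain ⟨C₁, hC₁0, hC₁⟩ := exists_integral_weight_mul_norm_sq_le hq hc hqc hs₁.1 hs₁.2 hκ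
  obtain ⟨C₂, hC₂0, hC₂⟩ :=
    exists_integral_norm_sq_smulLeftCLM_fourier_le hq hc hqc hs₂.1 hs₂.2 hκ
  refine ⟨√(C₁ * C₂), by positivity, fun τ hτ g ↦ ?_⟩
  have hq0 : ∀ x, 0 ≤ τ / 2 * q x := fun x ↦
    mul_nonneg (by positivity) ((by positivity : 0 ≤ c * ‖x‖ ^ 2).trans (hqc x))
  have hexp := (show (fun η ↦ τ / 2 * q η).HasTemperateGrowth by fun_prop).exp_neg hq0
  have hw := Function.hasTemperateGrowth_one_add_norm_sq_rpow V (-(κ * s₂) / 2)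
  have h2 := hC₂ τ hτ g
  have h1 := hC₁ τ hτ (SchwartzMap.smulLeftCLM ℂ (fun η ↦ Real.exp (-(τ / 2 * q η)))
        (𝓕 (SchwartzMap.smulLeftCLM ℂ (fun y ↦ (1 + ‖y‖ ^ 2) ^ (-(κ * s₂) / 2)) g)))
  have hcoe : (fun η ↦ (Real.exp (-(τ * q η)) : ℂ) *
      𝓕 (fun y ↦ (((1 + ‖y‖ ^ 2) ^ (-(κ * s₂) / 2) : ℝ) : ℂ) * g y) η) =
      SchwartzMap.smulLeftCLM ℂ (fun η ↦ Real.exp (-(τ / 2 * q η)))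
        (SchwartzMap.smulLeftCLM ℂ (fun η ↦ Real.exp (-(τ / 2 * q η)))
        (𝓕 (SchwartzMap.smulLeftCLM ℂ (fun y ↦ (1 + ‖y‖ ^ 2) ^ (-(κ * s₂) / 2)) g))) := by
    ext η
    have hg : (fun y ↦ (((1 + ‖y‖ ^ 2) ^ (-(κ * s₂) / 2) : ℝ) : ℂ) * g y) =
        SchwartzMap.smulLeftCLM ℂ (fun y ↦ (1 + ‖y‖ ^ 2) ^ (-(κ * s₂) / 2)) g := by
      ext y
      rw [SchwartzMap.smulLeftCLM_apply_apply hw, Complex.real_smul]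
    rw [hg, SchwartzMap.smulLeftCLM_apply_apply hexp, SchwartzMap.smulLeftCLM_apply_apply hexp,
      smul_smul, ← Real.exp_add, Complex.real_smul, SchwartzMap.fourier_coe]
    ring_nf
  rw [hcoe, ← SchwartzMap.fourierInv_coe]
  refine Real.sqrt_le_iff.2 ⟨by positivity, h1.trans ?_⟩
  calc _ ≤ C₁ * τ ^ (-s₁) * (C₂ * τ ^ (-s₂) * ∫ y, ‖g y‖ ^ 2) := by gcongr
    _ = C₁ * C₂ * τ ^ (-(s₁ + s₂)) * ∫ y, ‖g y‖ ^ 2 := by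
      rw [neg_add, Real.rpow_add hτ]
      ring
    _ = _ := by
      rw [mul_pow, mul_pow, Real.sq_sqrt (by positivity), Real.sq_sqrt (by positivity),
        ← Real.rpow_natCast, ← Real.rpow_mul hτ.le]
      norm_num

end HeatBound

/-- A continuous function that is homogeneous of degree two and positive away from `0` is bounded
below by a positive multiple of the squared norm. -/
theorem exists_pos_mul_norm_sq_le {V : Type*} [NormedAddCommGroup V] [NormedSpace ℝ V]
    [FiniteDimensional ℝ V] {q : V → ℝ} (hq : Continuous q)
    (hhom : ∀ (a : ℝ) x, q (a • x) = a ^ 2 * q x) (hpos : ∀ x, x ≠ 0 → 0 < q x) :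
    ∃ c : ℝ, 0 < c ∧ ∀ x, c * ‖x‖ ^ 2 ≤ q x := by
  have hzero : q 0 = 0 := by simpa using hhom 0 0
  rcases (Metric.sphere (0 : V) 1).eq_empty_or_nonempty with he | hne
  · refine ⟨1, one_pos, fun x ↦ ?_⟩
    by_cases hx : x = 0
    · simp [hx, hzero]
    · have : ‖x‖⁻¹ • x ∈ Metric.sphere (0 : V) 1 := by
        simp [norm_smul, norm_ne_zero_iff.2 hx]
      simp [he] at this
  · obtain ⟨x₀, hx₀, hmin⟩ := (isCompact_sphere (0 : V) 1).exists_isMinOn hne hq.continuousOn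
    refine ⟨q x₀, hpos x₀ (ne_zero_of_mem_unit_sphere ⟨x₀, hx₀⟩), fun x ↦ ?_⟩
    by_cases hx : x = 0
    · simp [hx, hzero]
    · have hx' : ‖x‖ ≠ 0 := norm_ne_zero_iff.2 hx
      have h := hmin (show ‖x‖⁻¹ • x ∈ Metric.sphere (0 : V) 1 by simp [norm_smul, hx'])
      simp only [Set.mem_ofPred_eq, hhom] at h
      calc q x₀ * ‖x‖ ^ 2 ≤ ‖x‖⁻¹ ^ 2 * q x * ‖x‖ ^ 2 := by gcongr
        _ = q x := by field_simp

theorem integral_pi_eq_integral_euclideanSpace {d : ℕ} {F : Type*} [NormedAddCommGroup F]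
    [NormedSpace ℝ F] (φ : (Fin d → ℝ) → F) :
    ∫ x, φ x = ∫ x : EuclideanSpace ℝ (Fin d), φ x.ofLp :=
  ((EuclideanSpace.volume_preserving_symm_measurableEquiv_toLp (Fin d)).integral_comp'
    φ).symm

/-- The Fourier transform on Euclidean space in the normalization `exp (-i y · ξ)`. -/
theorem fourier_euclideanSpace_eq {d : ℕ} (h : (Fin d → ℝ) → ℂ)
    (η : EuclideanSpace ℝ (Fin d)) :
    𝓕 (fun y : EuclideanSpace ℝ (Fin d) ↦ h y.ofLp) η =
      ∫ y : Fin d → ℝ, Complex.exp (-Complex.I *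
        ((∑ i, y i * ((2 * Real.pi) • η).ofLp i : ℝ) : ℂ)) * h y := by
  rw [Real.fourier_eq', integral_pi_eq_integral_euclideanSpace]
  refine integral_congr_ae (ae_of_all _ fun y ↦ ?_)
  simp only [smul_eq_mul, PiLp.inner_apply, RCLike.inner_apply, conj_trivial, PiLp.smul_apply]
  congr 2
  push_cast [Finset.mul_sum, Finset.sum_mul]
  refine Finset.sum_congr rfl fun i _ ↦ ?_
  ring

/-- The inverse Fourier transform on Euclidean space in the normalization `exp (i x · ξ)`. -/
theorem fourierInv_euclideanSpace_eq {d : ℕ} (u : (Fin d → ℝ) → ℂ)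
    (x : EuclideanSpace ℝ (Fin d)) :
    𝓕⁻ (fun η : EuclideanSpace ℝ (Fin d) ↦ u ((2 * Real.pi) • η).ofLp) x =
      ((2 * Real.pi) ^ d : ℂ)⁻¹ * ∫ ξ : Fin d → ℝ,
        Complex.exp (Complex.I * ((∑ i, x.ofLp i * ξ i : ℝ) : ℂ)) * u ξ := by
  have hpi := Real.pi_pos
  have := Measure.integral_comp_smul_of_nonneg (volume : Measure (EuclideanSpace ℝ (Fin d)))
    (fun ξ ↦ Complex.exp (Complex.I * ((∑ i, x.ofLp i * ξ.ofLp i : ℝ) : ℂ)) * u ξ.ofLp)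
    (2 * Real.pi) (hR := by positivity)
  rw [finrank_euclideanSpace_fin, Complex.real_smul] at this
  push_cast at this
  rw [integral_pi_eq_integral_euclideanSpace]
  push_cast
  rw [← this, Real.fourierInv_eq']
  refine integral_congr_ae (ae_of_all _ fun η ↦ ?_)
  simp only [smul_eq_mul, PiLp.inner_apply, RCLike.inner_apply, conj_trivial, PiLp.smul_apply]
  congr 2
  push_cast [Finset.mul_sum, Finset.sum_mul]
  refine Finset.sum_congr rfl fun i _ ↦ ?_
  ring

/-- Weighted decay for the constant-coefficient heat semigroup: for a positive definite
symmetric matrix `G*`, `b > 0`, `s₁, s₂ ∈ [0, d/2]` and `κ > 1`, there is `C ≥ 0` with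
`‖⟨x⟩^{-κs₁} e^{-tP/b} ⟨x⟩^{-κs₂}‖_{L(L²)} ≤ C t^{-(s₁+s₂)/2}` for `t ≥ 1`, where
`P = -div(G*∇)` acts via the Fourier transform as multiplication by `e^{-t⟨G*ξ,ξ⟩/b}`.
The operator bound is expressed by testing against Schwartz functions `g`. -/
theorem stmt9 {d : ℕ} (Gs : Fin d → Fin d → ℝ)
    (hGsym : ∀ i j, Gs i j = Gs j i)
    (hGpos : ∀ ξ : Fin d → ℝ, ξ ≠ 0 → 0 < ∑ i, ∑ j, Gs i j * ξ i * ξ j)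
    (b : ℝ) (hb : 0 < b)
    (s₁ s₂ κ : ℝ) (hs₁ : s₁ ∈ Set.Icc (0 : ℝ) ((d : ℝ) / 2))
    (hs₂ : s₂ ∈ Set.Icc (0 : ℝ) ((d : ℝ) / 2)) (hκ : 1 < κ) :
    ∃ C : ℝ, 0 ≤ C ∧ ∀ t : ℝ, 1 ≤ t → ∀ g : SchwartzMap (Fin d → ℝ) ℂ,
      Real.sqrt (∫ x : Fin d → ℝ,
          (1 + ∑ i, x i ^ 2) ^ (-(κ * s₁)) *
            ‖((2 * Real.pi) ^ d : ℂ)⁻¹ *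
              ∫ ξ : Fin d → ℝ,
                Complex.exp (Complex.I * ((∑ i, x i * ξ i : ℝ) : ℂ)) *
                Complex.exp (-(((t / b) * ∑ i, ∑ j, Gs i j * ξ i * ξ j : ℝ) : ℂ)) *
                ∫ y : Fin d → ℝ,
                  Complex.exp (-Complex.I * ((∑ i, y i * ξ i : ℝ) : ℂ)) *
                    ((((1 + ∑ i, y i ^ 2) ^ (-(κ * s₂) / 2) : ℝ) : ℂ) * g y)‖ ^ 2)
        ≤ C * t ^ (-(s₁ + s₂) / 2) * Real.sqrt (∫ x : Fin d → ℝ, ‖g x‖ ^ 2) := by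
  have hpi := Real.pi_pos
  let q : EuclideanSpace ℝ (Fin d) → ℝ := fun η ↦
    ((2 * Real.pi) ^ 2 / b) * ∑ i, ∑ j, Gs i j * η.ofLp i * η.ofLp j
  have hcoord : ∀ i : Fin d,
      (fun η : EuclideanSpace ℝ (Fin d) ↦ η.ofLp i).HasTemperateGrowth := fun i ↦
    (EuclideanSpace.proj (𝕜 := ℝ) i).hasTemperateGrowth
  have hq : q.HasTemperateGrowth := by
    refine (Function.HasTemperateGrowth.const _).mul
      (.sum fun i _ ↦ .sum fun j _ ↦ ((Function.HasTemperateGrowth.const _).mul ?_).mul ?_)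
    exacts [hcoord i, hcoord j]
  obtain ⟨c, hc, hqc⟩ : ∃ c : ℝ, 0 < c ∧ ∀ x, c * ‖x‖ ^ 2 ≤ q x := by
    refine exists_pos_mul_norm_sq_le hq.1.continuous (fun a x ↦ ?_) fun x hx ↦ ?_
    · simp only [q, PiLp.smul_apply, smul_eq_mul, Finset.mul_sum]
      refine Finset.sum_congr rfl fun i _ ↦ Finset.sum_congr rfl fun j _ ↦ ?_
      ring
    · have := hGpos x.ofLp (by simpa using hx)
      positivity
  rw [← finrank_euclideanSpace_fin (𝕜 := ℝ) (n := d)] at hs₁ hs₂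
  obtain ⟨C, hC0, hC⟩ := exists_sqrt_integral_weight_mul_norm_sq_le hq hc hqc hs₁ hs₂ hκ
  refine ⟨C, hC0, fun t ht g ↦ ?_⟩
  have h := hC t (by linarith)
    (SchwartzMap.compCLMOfContinuousLinearEquiv ℝ (EuclideanSpace.equiv (Fin d) ℝ) g)
  have hg : ∀ y : EuclideanSpace ℝ (Fin d),
      SchwartzMap.compCLMOfContinuousLinearEquiv ℝ (EuclideanSpace.equiv (Fin d) ℝ) g y =
        g y.ofLp := fun y ↦ rfl
  have hnorm : ∀ y : EuclideanSpace ℝ (Fin d), ‖y‖ ^ 2 = ∑ i, y.ofLp i ^ 2 := fun y ↦ by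
    simp [EuclideanSpace.norm_sq_eq]
  simp only [hg, hnorm] at h
  rw [integral_pi_eq_integral_euclideanSpace, integral_pi_eq_integral_euclideanSpace
    (fun x ↦ ‖g x‖ ^ 2)]
  convert h using 9 with x
  simp only [mul_assoc]
  rw [← fourierInv_euclideanSpace_eq]
  refine congrArg (fun F : EuclideanSpace ℝ (Fin d) → ℂ ↦ 𝓕⁻ F x) (funext fun η ↦ ?_)
  rw [fourier_euclideanSpace_eq (fun y ↦
    (((1 + ∑ i, y i ^ 2) ^ (-(κ * s₂) / 2) : ℝ) : ℂ) * g y)]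
  congr 1
  rw [Complex.ofReal_exp, ← Complex.ofReal_neg]
  congr 3
  simp only [q, PiLp.smul_apply, smul_eq_mul, Finset.mul_sum]
  refine Finset.sum_congr rfl fun i _ ↦ Finset.sum_congr rfl fun j _ ↦ ?_
  field_simp
end

section
/- (Heat-kernel time-derivative decay) With G*, b, P as above and s₁, s₂ ∈ [0,d/2], κ > 1, there exists C ≥ 0 such that for all t ≥ 1, ‖⟨x⟩^{−κ s₁} P e^{−tP/b} ⟨x⟩^{−κ s₂}‖_{L(L²(ℝ^d))} ≤ C t^{−1−(s₁+s₂)/2}. -/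
open MeasureTheory

open Matrix in
theorem exists_matrix_sum_sq_eq {d : ℕ} (Gs : Fin d → Fin d → ℝ)
    (hGsym : ∀ i j, Gs i j = Gs j i)
    (hGpos : ∀ ξ : Fin d → ℝ, ξ ≠ 0 → 0 < ∑ i, ∑ j, Gs i j * ξ i * ξ j) :
    ∃ B : Matrix (Fin d) (Fin d) ℝ, B.det ≠ 0 ∧
      ∀ ξ : Fin d → ℝ, ∑ i, ∑ j, Gs i j * ξ i * ξ j = ∑ i, (B *ᵥ ξ) i ^ 2 := by
  have hquad : ∀ ξ : Fin d → ℝ,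
      ξ ⬝ᵥ (Matrix.of Gs *ᵥ ξ) = ∑ i, ∑ j, Gs i j * ξ i * ξ j := fun ξ ↦ by
    simp only [dotProduct, mulVec, Matrix.of_apply, Finset.mul_sum]
    exact Finset.sum_congr rfl fun i _ ↦ Finset.sum_congr rfl fun j _ ↦ by ring
  have hpd : (Matrix.of Gs).PosDef := by
    refine Matrix.PosDef.of_dotProduct_mulVec_pos ?_ fun x hx ↦ ?_
    · ext i j
      simpa using hGsym j i
    · simpa [hquad] using hGpos x hx
  have hdet := hpd.det_pos.ne'
  open scoped MatrixOrder in
  obtain ⟨B, hB⟩ := CStarAlgebra.nonneg_iff_eq_star_mul_self.mp hpd.posSemidef.nonneg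
  refine ⟨B, fun h ↦ hdet ?_, fun ξ ↦ ?_⟩
  · rw [hB, det_mul, h, mul_zero]
  · rw [← hquad, hB, star_eq_conjTranspose, conjTranspose_eq_transpose_of_trivial, ← mulVec_mulVec,
      dotProduct_mulVec, vecMul_transpose, dotProduct]
    exact Finset.sum_congr rfl fun i _ ↦ (sq _).symm

theorem integrable_exp_neg_mul_sum_sq {d : ℕ} {c : ℝ} (hc : 0 < c) :
    Integrable fun v : Fin d → ℝ ↦ Real.exp (-(c * ∑ i, v i ^ 2)) := by
  have h := (GaussianFourier.integrable_cexp_neg_mul_sum_add (ι := Fin d) (b := (c : ℂ))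
    (by simpa using hc) 0).norm
  refine h.congr (.of_forall fun v ↦ ?_)
  simp only [Pi.zero_apply, zero_mul, Finset.sum_const_zero, add_zero, Complex.norm_exp]
  congr 1
  rw [← Complex.ofReal_re (-(c * ∑ i, v i ^ 2))]
  push_cast
  congr 1
  ring

theorem mul_exp_neg_mul_le {c q : ℝ} (hc : 0 < c) :
    q * Real.exp (-(c * q)) ≤ 2 / c * Real.exp (-(c / 2 * q)) := by
  have h : c / 2 * q ≤ Real.exp (c / 2 * q) := by
    linarith [Real.add_one_le_exp (c / 2 * q)]
  have e : Real.exp (-(c / 2 * q)) = Real.exp (c / 2 * q) * Real.exp (-(c * q)) := by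
    rw [← Real.exp_add]; congr 1; ring
  rw [e]
  calc q * Real.exp (-(c * q)) = 2 / c * (c / 2 * q * Real.exp (-(c * q))) := by
        field_simp
    _ ≤ _ := by gcongr

theorem integral_phase_mul_exp_neg_mul_sum_sq {d : ℕ} {c : ℝ} (hc : 0 < c) (w : Fin d → ℝ) :
    ∫ η : Fin d → ℝ, Complex.exp (Complex.I * ((∑ i, w i * η i : ℝ) : ℂ)) *
        Complex.exp (-((c * ∑ i, η i ^ 2 : ℝ) : ℂ)) =
      ((Real.pi ^ ((d : ℝ) / 2) * (c ^ (-((d : ℝ) / 2)) *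
        Real.exp (-(((∑ i, w i ^ 2) / 4) * c⁻¹))) : ℝ) : ℂ) := by
  have h := GaussianFourier.integral_cexp_neg_mul_sum_add (ι := Fin d) (b := (c : ℂ))
    (by simpa using hc) (fun i ↦ Complex.I * (w i : ℂ))
  have h1 : ((Real.pi : ℂ) / c) ^ ((Fintype.card (Fin d) : ℂ) / 2) =
      ((Real.pi ^ ((d : ℝ) / 2) * c ^ (-((d : ℝ) / 2)) : ℝ) : ℂ) := by
    rw [Real.rpow_neg hc.le, ← div_eq_mul_inv, ← Real.div_rpow Real.pi_pos.le hc.le,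
      Complex.ofReal_cpow (by positivity)]
    simp
  rw [h1] at h
  rw [← mul_assoc, Complex.ofReal_mul, Complex.ofReal_exp]
  convert h using 1
  · refine integral_congr_ae (.of_forall fun η ↦ ?_)
    simp only [← Complex.exp_add]
    congr 1
    push_cast
    rw [Finset.mul_sum]
    simp only [mul_assoc]
    ring
  · congr 2
    push_cast
    simp only [mul_pow, Complex.I_sq, ← Finset.mul_sum]
    field_simp

theorem integrable_sum_sq_mul_exp {d : ℕ} {c : ℝ} (hc : 0 < c) :
    Integrable fun η : Fin d → ℝ ↦ (∑ i, η i ^ 2) * Real.exp (-(c * ∑ i, η i ^ 2)) := by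
  refine ((integrable_exp_neg_mul_sum_sq (half_pos hc)).const_mul (2 / c)).mono'
    (Continuous.aestronglyMeasurable (by fun_prop)) (.of_forall fun η ↦ ?_)
  rw [Real.norm_of_nonneg (by positivity)]
  exact mul_exp_neg_mul_le hc

theorem integral_phase_mul_sum_sq_mul_exp {d : ℕ} {c : ℝ} (hc : 0 < c) (w : Fin d → ℝ) :
    ∫ η : Fin d → ℝ, Complex.exp (Complex.I * ((∑ i, w i * η i : ℝ) : ℂ)) *
        ((∑ i, η i ^ 2 : ℝ) : ℂ) * Complex.exp (-((c * ∑ i, η i ^ 2 : ℝ) : ℂ)) =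
      ((Real.pi ^ ((d : ℝ) / 2) * (c ^ (-((d : ℝ) / 2) - 1) *
        ((d : ℝ) / 2 - (∑ i, w i ^ 2) / 4 * c⁻¹) *
          Real.exp (-(((∑ i, w i ^ 2) / 4) * c⁻¹))) : ℝ) : ℂ) := by
  set r := ∑ i, w i ^ 2
  have hph : ∀ η : Fin d → ℝ,
      ‖Complex.exp (Complex.I * ((∑ i, w i * η i : ℝ) : ℂ))‖ = 1 := fun η ↦ by
    rw [mul_comm]; exact Complex.norm_exp_ofReal_mul_I _
  have key := (hasDerivAt_integral_of_dominated_loc_of_deriv_le (𝕜 := ℝ) (x₀ := c)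
    (s := Set.Ioi (c / 2)) (μ := (volume : Measure (Fin d → ℝ)))
    (F := fun c η ↦ Complex.exp (Complex.I * ((∑ i, w i * η i : ℝ) : ℂ)) *
        Complex.exp (-((c * ∑ i, η i ^ 2 : ℝ) : ℂ)))
    (F' := fun c η ↦ -(Complex.exp (Complex.I * ((∑ i, w i * η i : ℝ) : ℂ)) *
        ((∑ i, η i ^ 2 : ℝ) : ℂ) * Complex.exp (-((c * ∑ i, η i ^ 2 : ℝ) : ℂ))))
    (bound := fun η ↦ (∑ i, η i ^ 2) * Real.exp (-(c / 2 * ∑ i, η i ^ 2)))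
    (Ioi_mem_nhds (by linarith))
    (.of_forall fun c ↦ Continuous.aestronglyMeasurable (by fun_prop)) ?_
    (Continuous.aestronglyMeasurable (by fun_prop)) ?_
    (integrable_sum_sq_mul_exp (half_pos hc)) ?_).2
  · have hJ : HasDerivAt (fun c : ℝ ↦ ((Real.pi ^ ((d : ℝ) / 2) * (c ^ (-((d : ℝ) / 2)) *
        Real.exp (-((r / 4) * c⁻¹))) : ℝ) : ℂ)) _ c :=
      (((Real.hasDerivAt_rpow_const (p := -((d : ℝ) / 2)) (Or.inl hc.ne')).mul
        (((hasDerivAt_inv hc.ne').const_mul (r / 4)).neg.exp)).const_mul _).ofReal_comp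
    have hE := hJ.congr_of_eventuallyEq (f₁ := fun c : ℝ ↦ ∫ η : Fin d → ℝ,
        Complex.exp (Complex.I * ((∑ i, w i * η i : ℝ) : ℂ)) *
        Complex.exp (-((c * ∑ i, η i ^ 2 : ℝ) : ℂ)))
      (Filter.eventuallyEq_of_mem (Ioi_mem_nhds hc) fun x hx ↦
        integral_phase_mul_exp_neg_mul_sum_sq hx w)
    have hu := key.unique hE
    rw [integral_neg, neg_eq_iff_eq_neg] at hu
    rw [hu, ← Complex.ofReal_neg]
    congr 1
    have hp : c ^ (-((d : ℝ) / 2)) = c ^ (-((d : ℝ) / 2) - 1) * c := by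
      rw [← Real.rpow_add_one hc.ne']; congr 1; ring
    simp only [hp, Pi.neg_apply]
    field_simp
    ring
  · refine (integrable_exp_neg_mul_sum_sq (d := d) hc).mono'
      (Continuous.aestronglyMeasurable (by fun_prop)) (.of_forall fun η ↦ ?_)
    rw [norm_mul, hph, one_mul, ← Complex.ofReal_neg, Complex.norm_exp_ofReal]
  · refine .of_forall fun η x hx ↦ ?_
    have h0 : 0 ≤ ∑ i, η i ^ 2 := by positivity
    rw [norm_neg, norm_mul, norm_mul, hph, one_mul, ← Complex.ofReal_neg,
      Complex.norm_exp_ofReal, Complex.norm_real, Real.norm_of_nonneg h0]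
    have : c / 2 ≤ x := le_of_lt hx
    gcongr
  · refine .of_forall fun η x _ ↦ ?_
    have h := ((((hasDerivAt_id x).mul_const (∑ i, η i ^ 2)).ofReal_comp).neg.cexp).const_mul
      (Complex.exp (Complex.I * ((∑ i, w i * η i : ℝ) : ℂ)))
    convert! h using 1
    simp
    ring

theorem norm_integral_phase_mul_sum_sq_mul_exp_le {d : ℕ} {c : ℝ} (hc : 0 < c) (w : Fin d → ℝ) :
    ‖∫ η : Fin d → ℝ, Complex.exp (Complex.I * ((∑ i, w i * η i : ℝ) : ℂ)) *
        ((∑ i, η i ^ 2 : ℝ) : ℂ) * Complex.exp (-((c * ∑ i, η i ^ 2 : ℝ) : ℂ))‖ ≤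
      Real.pi ^ ((d : ℝ) / 2) * ((d : ℝ) / 2 + 2) * c ^ (-((d : ℝ) / 2) - 1) *
        Real.exp (-((∑ i, w i ^ 2) / (8 * c))) := by
  rw [integral_phase_mul_sum_sq_mul_exp hc, Complex.norm_real, Real.norm_eq_abs, abs_mul, abs_mul,
    abs_mul, abs_of_pos (Real.exp_pos _), abs_of_pos (by positivity : 0 < Real.pi ^ ((d : ℝ) / 2)),
    abs_of_pos (by positivity : 0 < c ^ (-((d : ℝ) / 2) - 1))]
  set x := (∑ i, w i ^ 2) / 4 * c⁻¹ with hx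
  have hx0 : 0 ≤ x := by positivity
  have e8 : (∑ i, w i ^ 2) / (8 * c) = x / 2 := by rw [hx]; field_simp; ring
  rw [e8]
  have habs : |(d : ℝ) / 2 - x| ≤ (d : ℝ) / 2 + x := by
    rw [abs_le]; constructor <;> [nlinarith [(by positivity : (0 : ℝ) ≤ d)]; linarith]
  have h1 : x * Real.exp (-x) ≤ 2 * Real.exp (-(x / 2)) := by
    have := mul_exp_neg_mul_le (q := x) one_pos
    simp only [one_mul, div_one] at this
    convert this using 3
    ring
  have h2 : Real.exp (-x) ≤ Real.exp (-(x / 2)) := Real.exp_le_exp.2 (by linarith)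
  have h3 : |(d : ℝ) / 2 - x| * Real.exp (-x) ≤ ((d : ℝ) / 2 + 2) * Real.exp (-(x / 2)) := by
    calc _ ≤ ((d : ℝ) / 2 + x) * Real.exp (-x) := by gcongr
      _ = (d : ℝ) / 2 * Real.exp (-x) + x * Real.exp (-x) := by ring
      _ ≤ (d : ℝ) / 2 * Real.exp (-(x / 2)) + 2 * Real.exp (-(x / 2)) := by gcongr
      _ = _ := by ring
  calc _ = Real.pi ^ ((d : ℝ) / 2) * c ^ (-((d : ℝ) / 2) - 1) *
        (|(d : ℝ) / 2 - x| * Real.exp (-x)) := by ring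
    _ ≤ Real.pi ^ ((d : ℝ) / 2) * c ^ (-((d : ℝ) / 2) - 1) *
        (((d : ℝ) / 2 + 2) * Real.exp (-(x / 2))) := by gcongr
    _ = _ := by ring

open Matrix in
theorem map_mulVec_volume {d : ℕ} {B : Matrix (Fin d) (Fin d) ℝ} (hB : B.det ≠ 0) :
    Measure.map (fun ξ : Fin d → ℝ ↦ B *ᵥ ξ) volume = ENNReal.ofReal |B.det⁻¹| • volume :=
  Real.map_matrix_volume_pi_eq_smul_volume_pi hB

open Matrix in
theorem integrable_sum_mulVec_sq_mul_exp {d : ℕ} {B : Matrix (Fin d) (Fin d) ℝ} (hB : B.det ≠ 0)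
    {c : ℝ} (hc : 0 < c) :
    Integrable fun ξ : Fin d → ℝ ↦
      (∑ i, (B *ᵥ ξ) i ^ 2) * Real.exp (-(c * ∑ i, (B *ᵥ ξ) i ^ 2)) := by
  refine Integrable.comp_measurable (f := fun ξ : Fin d → ℝ ↦ B *ᵥ ξ)
    (g := fun η : Fin d → ℝ ↦ (∑ i, η i ^ 2) * Real.exp (-(c * ∑ i, η i ^ 2))) ?_
    (by fun_prop)
  rw [map_mulVec_volume hB]
  exact (integrable_sum_sq_mul_exp hc).smul_measure ENNReal.ofReal_ne_top

open Matrix in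
/-- Gaussian bound for the convolution kernel of the multiplier `|Bξ|² e^{-c|Bξ|²}`. -/
theorem exists_norm_kernel_le {d : ℕ} {B : Matrix (Fin d) (Fin d) ℝ} (hB : B.det ≠ 0) :
    ∃ M a : ℝ, 0 < M ∧ 0 < a ∧ ∀ c : ℝ, 0 < c → ∀ z : Fin d → ℝ,
      ‖∫ ξ : Fin d → ℝ, Complex.exp (Complex.I * ((∑ i, z i * ξ i : ℝ) : ℂ)) *
        ((∑ i, (B *ᵥ ξ) i ^ 2 : ℝ) : ℂ) *
          Complex.exp (-((c * ∑ i, (B *ᵥ ξ) i ^ 2 : ℝ) : ℂ))‖ ≤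
        M * c ^ (-((d : ℝ) / 2) - 1) * Real.exp (-(a / c * ∑ i, z i ^ 2)) := by
  set N : ℝ := ∑ i, ∑ j, B j i ^ 2 + 1
  have hN0 : 0 < N := by positivity
  refine ⟨|B.det⁻¹| * (Real.pi ^ ((d : ℝ) / 2) * ((d : ℝ) / 2 + 2)), 1 / (8 * N),
    by positivity, by positivity, fun c hc z ↦ ?_⟩
  set w : Fin d → ℝ := B⁻¹ᵀ *ᵥ z with hw
  have hz : Bᵀ *ᵥ w = z := by
    rw [hw, mulVec_mulVec, ← transpose_mul, nonsing_inv_mul _ (isUnit_iff_ne_zero.2 hB),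
      transpose_one, one_mulVec]
  have hdot : ∀ ξ : Fin d → ℝ, ∑ i, z i * ξ i = ∑ i, w i * (B *ᵥ ξ) i := fun ξ ↦ by
    change z ⬝ᵥ ξ = w ⬝ᵥ (B *ᵥ ξ)
    rw [dotProduct_mulVec, ← hz, mulVec_transpose]
  have hzw : ∑ i, z i ^ 2 ≤ N * ∑ i, w i ^ 2 := by
    calc ∑ i, z i ^ 2 = ∑ i, (∑ j, B j i * w j) ^ 2 := by
          conv_lhs => rw [← hz]
          rfl
      _ ≤ ∑ i, (∑ j, B j i ^ 2) * ∑ j, w j ^ 2 :=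
          Finset.sum_le_sum fun i _ ↦ Finset.sum_mul_sq_le_sq_mul_sq _ _ _
      _ = (∑ i, ∑ j, B j i ^ 2) * ∑ j, w j ^ 2 := by rw [Finset.sum_mul]
      _ ≤ _ := by
          gcongr
          linarith
  have hsub := integral_map_of_stronglyMeasurable (μ := (volume : Measure (Fin d → ℝ)))
    (φ := fun ξ : Fin d → ℝ ↦ B *ᵥ ξ)
    (f := fun η : Fin d → ℝ ↦ Complex.exp (Complex.I * ((∑ i, w i * η i : ℝ) : ℂ)) *
        ((∑ i, η i ^ 2 : ℝ) : ℂ) * Complex.exp (-((c * ∑ i, η i ^ 2 : ℝ) : ℂ)))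
    (by fun_prop) (Continuous.stronglyMeasurable (by fun_prop))
  rw [map_mulVec_volume hB, integral_smul_measure] at hsub
  simp only [hdot]
  rw [← hsub, norm_smul, ENNReal.toReal_ofReal (abs_nonneg _), Real.norm_eq_abs, abs_abs]
  have hexp : Real.exp (-((∑ i, w i ^ 2) / (8 * c))) ≤
      Real.exp (-(1 / (8 * N) / c * ∑ i, z i ^ 2)) := by
    refine Real.exp_le_exp.2 (neg_le_neg ?_)
    calc 1 / (8 * N) / c * ∑ i, z i ^ 2 ≤ 1 / (8 * N) / c * (N * ∑ i, w i ^ 2) := by gcongr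
      _ = _ := by field_simp
  calc _ ≤ |B.det⁻¹| * (Real.pi ^ ((d : ℝ) / 2) * ((d : ℝ) / 2 + 2) * c ^ (-((d : ℝ) / 2) - 1) *
        Real.exp (-((∑ i, w i ^ 2) / (8 * c)))) := by
        gcongr
        exact norm_integral_phase_mul_sum_sq_mul_exp_le hc w
    _ ≤ |B.det⁻¹| * (Real.pi ^ ((d : ℝ) / 2) * ((d : ℝ) / 2 + 2) * c ^ (-((d : ℝ) / 2) - 1) *
        Real.exp (-(1 / (8 * N) / c * ∑ i, z i ^ 2))) := by gcongr
    _ = _ := by ring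

theorem integral_exp_neg_mul_sum_sq {d : ℕ} {c : ℝ} (hc : 0 < c) :
    ∫ η : Fin d → ℝ, Real.exp (-(c * ∑ i, η i ^ 2)) =
      Real.pi ^ ((d : ℝ) / 2) * c ^ (-((d : ℝ) / 2)) := by
  have h := integral_phase_mul_exp_neg_mul_sum_sq hc (0 : Fin d → ℝ)
  simp only [Pi.zero_apply, zero_mul, Finset.sum_const_zero, Complex.ofReal_zero, mul_zero,
    Complex.exp_zero, one_mul, ← Complex.ofReal_neg, ← Complex.ofReal_exp, integral_complex_ofReal,
    ne_eq, OfNat.ofNat_ne_zero, not_false_eq_true, zero_pow, zero_div, neg_zero, Real.exp_zero,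
    mul_one] at h
  exact_mod_cast h

theorem integrable_one_add_sum_sq_rpow {d : ℕ} {κ : ℝ} (hκ : 1 < κ) :
    Integrable fun y : Fin d → ℝ ↦ (1 + ∑ i, y i ^ 2) ^ (-(κ * ((d : ℝ) / 2))) := by
  rcases Nat.eq_zero_or_pos d with rfl | hd
  · simp
  have hd' : (0 : ℝ) < d := by exact_mod_cast hd
  have h := integrable_rpow_neg_one_add_norm_sq (E := Fin d → ℝ) (μ := volume) (r := κ * d)
    (by simpa using lt_mul_of_one_lt_left hd' hκ)
  have hpos : ∀ y : Fin d → ℝ, 0 < 1 + ∑ i, y i ^ 2 := fun y ↦ by positivity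
  refine h.mono' (Continuous.aestronglyMeasurable ?_) (.of_forall fun y ↦ ?_)
  · exact Continuous.rpow_const (by fun_prop) fun y ↦ Or.inl (hpos y).ne'
  · rw [Real.norm_of_nonneg (by have := hpos y; positivity), neg_div, mul_div_assoc]
    refine Real.rpow_le_rpow_of_nonpos (by positivity) ?_ (by
      have : 0 < κ := by linarith
      simp only [Left.neg_nonpos_iff]; positivity)
    have hn : ‖y‖ ≤ √(∑ i, y i ^ 2) := by
      refine (pi_norm_le_iff_of_nonneg (by positivity)).2 fun i ↦ Real.le_sqrt_of_sq_le ?_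
      rw [Real.norm_eq_abs, sq_abs]
      exact Finset.single_le_sum (f := fun i ↦ y i ^ 2) (fun _ _ ↦ sq_nonneg _)
        (Finset.mem_univ i)
    have := Real.le_sqrt (by positivity) (by positivity) |>.1 hn
    linarith

theorem exists_integral_exp_mul_weight_le {d : ℕ} {a s κ : ℝ} (ha : 0 < a)
    (hs : s ∈ Set.Icc (0 : ℝ) ((d : ℝ) / 2)) (hκ : 1 < κ) :
    ∃ C : ℝ, 0 ≤ C ∧ ∀ c : ℝ, 0 < c → ∀ x : Fin d → ℝ,
      ∫ y : Fin d → ℝ, Real.exp (-(a / c * ∑ i, (x - y) i ^ 2)) *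
        (1 + ∑ i, y i ^ 2) ^ (-(κ * s)) ≤ C * c ^ ((d : ℝ) / 2 - s) := by
  obtain ⟨θ, hθ0, hθ1, hθ⟩ : ∃ θ : ℝ, 0 ≤ θ ∧ θ ≤ 1 ∧ s = θ * ((d : ℝ) / 2) := by
    rcases Nat.eq_zero_or_pos d with rfl | hd
    · exact ⟨0, le_rfl, zero_le_one, le_antisymm (by simpa using hs.2) (by simpa using hs.1)⟩
    · have hd' : (0 : ℝ) < (d : ℝ) / 2 := by positivity
      exact ⟨s / ((d : ℝ) / 2), div_nonneg hs.1 hd'.le, (div_le_one hd').2 hs.2, by field_simp⟩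
  refine ⟨Real.pi ^ ((d : ℝ) / 2) * a ^ (-((d : ℝ) / 2)) +
    ∫ y : Fin d → ℝ, (1 + ∑ i, y i ^ 2) ^ (-(κ * ((d : ℝ) / 2))), ?_, fun c hc x ↦ ?_⟩
  · have := integral_nonneg (μ := volume)
      (f := fun y : Fin d → ℝ ↦ (1 + ∑ i, y i ^ 2) ^ (-(κ * ((d : ℝ) / 2))))
      fun y ↦ by positivity
    positivity
  set p : ℝ := (d : ℝ) / 2
  have hac : 0 < a / c := by positivity
  have hE : Integrable fun y : Fin d → ℝ ↦ Real.exp (-(a / c * ∑ i, (x - y) i ^ 2)) :=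
    (integrable_exp_neg_mul_sum_sq hac).comp_sub_left x
  have hEi : ∫ y : Fin d → ℝ, Real.exp (-(a / c * ∑ i, (x - y) i ^ 2)) * c ^ (-p) =
      Real.pi ^ p * a ^ (-p) := by
    rw [integral_mul_const, integral_sub_left_eq_self
      (fun z : Fin d → ℝ ↦ Real.exp (-(a / c * ∑ i, z i ^ 2))), integral_exp_neg_mul_sum_sq hac,
      mul_assoc, ← Real.mul_rpow hac.le hc.le, div_mul_cancel₀ _ hc.ne']
  have hW := integrable_one_add_sum_sq_rpow (d := d) hκ
  calc _ ≤ ∫ y : Fin d → ℝ, c ^ (p - s) * (Real.exp (-(a / c * ∑ i, (x - y) i ^ 2)) * c ^ (-p) +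
        (1 + ∑ i, y i ^ 2) ^ (-(κ * p))) := by
        refine integral_mono_of_nonneg (.of_forall fun y ↦ by positivity)
          (((hE.mul_const _).add hW).const_mul _) (.of_forall fun y ↦ ?_)
        dsimp only
        set E := Real.exp (-(a / c * ∑ i, (x - y) i ^ 2))
        have hE0 : 0 < E := Real.exp_pos _
        have hE1 : E ≤ 1 := Real.exp_le_one_iff.2 (by
          have : 0 ≤ a / c * ∑ i, (x - y) i ^ 2 := by positivity
          linarith)
        have hb : 0 < 1 + ∑ i, y i ^ 2 := by positivity
        have hw : (1 + ∑ i, y i ^ 2) ^ (-(κ * s)) = ((1 + ∑ i, y i ^ 2) ^ (-(κ * p))) ^ θ := by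
          rw [← Real.rpow_mul hb.le, hθ]; congr 1; ring
        rw [hw]
        set W := (1 + ∑ i, y i ^ 2) ^ (-(κ * p))
        have hW0 : 0 < W := by positivity
        have hEθ : E ≤ E ^ (1 - θ) := by
          conv_lhs => rw [← Real.rpow_one E]
          exact Real.rpow_le_rpow_of_exponent_ge hE0 hE1 (by linarith)
        have hcE : E ^ (1 - θ) = c ^ (p - s) * (E * c ^ (-p)) ^ (1 - θ) := by
          rw [Real.mul_rpow hE0.le (by positivity), ← Real.rpow_mul hc.le, mul_left_comm,
            ← Real.rpow_add hc, hθ]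
          have : p - θ * p + -p * (1 - θ) = 0 := by ring
          rw [this, Real.rpow_zero, mul_one]
        have hag := Real.geom_mean_le_arith_mean2_weighted (w₁ := 1 - θ) (w₂ := θ)
          (p₁ := E * c ^ (-p)) (p₂ := W) (by linarith) hθ0 (by positivity) hW0.le (by ring)
        calc E * W ^ θ ≤ E ^ (1 - θ) * W ^ θ := by gcongr
          _ = c ^ (p - s) * ((E * c ^ (-p)) ^ (1 - θ) * W ^ θ) := by rw [hcE]; ring
          _ ≤ c ^ (p - s) * ((1 - θ) * (E * c ^ (-p)) + θ * W) := by gcongr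
          _ ≤ c ^ (p - s) * (E * c ^ (-p) + W) := by
            refine mul_le_mul_of_nonneg_left (add_le_add ?_ ?_) (by positivity)
            · exact mul_le_of_le_one_left (by positivity) (by linarith)
            · exact mul_le_of_le_one_left hW0.le hθ1
    _ = _ := by
      rw [integral_const_mul, integral_add (hE.mul_const _) hW, hEi, mul_comm]

/-- A weighted Schur test for convolution-type kernels. -/
theorem integral_weight_mul_sq_norm_le {d : ℕ} {k w₁ w₂ G : (Fin d → ℝ) → ℝ}
    {v : (Fin d → ℝ) → ℂ} {A₁ A₂ K : ℝ} (hkc : Continuous k) (hk0 : ∀ z, 0 ≤ k z)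
    (hkK : ∀ z, k z ≤ K) (hki : Integrable k) (hkneg : ∀ z, k (-z) = k z)
    (hw₁c : Continuous w₁) (hw₁0 : ∀ z, 0 ≤ w₁ z) (hw₁1 : ∀ z, w₁ z ≤ 1)
    (hw₂c : Continuous w₂) (hw₂0 : ∀ z, 0 ≤ w₂ z) (hw₂1 : ∀ z, w₂ z ≤ 1)
    (hGi : Integrable G)
    (hG2 : Integrable fun y ↦ G y ^ 2) (hA₂ : 0 ≤ A₂)
    (h₁ : ∀ x, ∫ y, k (x - y) * w₁ y ≤ A₁) (h₂ : ∀ x, ∫ y, k (x - y) * w₂ y ^ 2 ≤ A₂)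
    (hv : ∀ x, ‖v x‖ ≤ ∫ y, k (x - y) * (w₂ y * G y)) :
    ∫ x, w₁ x * ‖v x‖ ^ 2 ≤ A₂ * A₁ * ∫ y, G y ^ 2 := by
  have hkx : ∀ x, Integrable fun y ↦ k (x - y) := fun x ↦ hki.comp_sub_left x
  have hi2 : ∀ x, Integrable fun y ↦ k (x - y) * w₂ y ^ 2 := fun x ↦
    (hkx x).mul_bdd (c := 1) (Continuous.aestronglyMeasurable (by fun_prop))
      (.of_forall fun y ↦ by
        rw [Real.norm_of_nonneg (by positivity)]
        exact pow_le_one₀ (hw₂0 y) (hw₂1 y))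
  have hiG : ∀ x, Integrable fun y ↦ k (x - y) * G y ^ 2 := fun x ↦
    hG2.bdd_mul (c := K) (Continuous.aestronglyMeasurable (by fun_prop))
      (.of_forall fun y ↦ by rw [Real.norm_of_nonneg (hk0 _)]; exact hkK _)
  have hiwG : ∀ x, Integrable fun y ↦ k (x - y) * (w₂ y * G y) := fun x ↦
    (hGi.bdd_mul (c := 1) hw₂c.aestronglyMeasurable
      (.of_forall fun y ↦ by rw [Real.norm_of_nonneg (hw₂0 _)]; exact hw₂1 _)).bdd_mul (c := K)
      (Continuous.aestronglyMeasurable (by fun_prop))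
      (.of_forall fun y ↦ by rw [Real.norm_of_nonneg (hk0 _)]; exact hkK _)
  have hcs : ∀ x, ‖v x‖ ^ 2 ≤ A₂ * ∫ y, k (x - y) * G y ^ 2 := fun x ↦ by
    set X := ∫ y, k (x - y) * (w₂ y * G y)
    have hB0 : 0 ≤ ∫ y, k (x - y) * G y ^ 2 :=
      integral_nonneg fun y ↦ mul_nonneg (hk0 _) (sq_nonneg _)
    have hdisc : discrim (∫ y, k (x - y) * w₂ y ^ 2) (-2 * X) (∫ y, k (x - y) * G y ^ 2) ≤ 0 := by
      refine discrim_le_zero fun l ↦ ?_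
      have e : ∫ y, k (x - y) * (l * w₂ y - G y) ^ 2 =
          (∫ y, k (x - y) * w₂ y ^ 2) * (l * l) + -2 * X * l + ∫ y, k (x - y) * G y ^ 2 := by
        have e1 : ∀ y, k (x - y) * (l * w₂ y - G y) ^ 2 = k (x - y) * w₂ y ^ 2 * (l * l) +
            k (x - y) * (w₂ y * G y) * (-2 * l) + k (x - y) * G y ^ 2 := fun y ↦ by ring
        have hi : Integrable fun y ↦
            k (x - y) * w₂ y ^ 2 * (l * l) + k (x - y) * (w₂ y * G y) * (-2 * l) :=
          ((hi2 x).mul_const _).add ((hiwG x).mul_const _)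
        simp only [e1]
        rw [integral_add hi (hiG x),
          integral_add ((hi2 x).mul_const _) ((hiwG x).mul_const _), integral_mul_const,
          integral_mul_const]
        ring
      rw [← e]
      exact integral_nonneg fun y ↦ mul_nonneg (hk0 _) (sq_nonneg _)
    rw [discrim] at hdisc
    have hX : ‖v x‖ ^ 2 ≤ X ^ 2 := pow_le_pow_left₀ (norm_nonneg _) (hv x) 2
    have := mul_le_mul_of_nonneg_right (h₂ x) hB0
    nlinarith
  have hprod : Integrable (Function.uncurry fun x y : Fin d → ℝ ↦ w₁ x * (k (x - y) * G y ^ 2))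
      (volume.prod volume) := by
    have h := (hG2.convolution_integrand (ContinuousLinearMap.mul ℝ ℝ) hki).bdd_mul (c := 1)
      (f := fun p : (Fin d → ℝ) × (Fin d → ℝ) ↦ w₁ p.1)
      (Continuous.aestronglyMeasurable (by fun_prop))
      (.of_forall fun p ↦ by rw [Real.norm_of_nonneg (hw₁0 _)]; exact hw₁1 _)
    refine h.congr (.of_forall fun p ↦ ?_)
    simp [Function.uncurry, mul_comm]
  calc ∫ x, w₁ x * ‖v x‖ ^ 2 ≤ ∫ x, A₂ * ∫ y, w₁ x * (k (x - y) * G y ^ 2) := by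
        refine integral_mono_of_nonneg (.of_forall fun x ↦ mul_nonneg (hw₁0 x) (sq_nonneg _))
          (hprod.integral_prod_left.const_mul _) (.of_forall fun x ↦ ?_)
        dsimp only
        rw [integral_const_mul, mul_left_comm]
        exact mul_le_mul_of_nonneg_left (hcs x) (hw₁0 x)
    _ = A₂ * ∫ y, ∫ x, w₁ x * (k (x - y) * G y ^ 2) := by
        rw [integral_const_mul, integral_integral_swap hprod]
    _ ≤ A₂ * ∫ y, A₁ * G y ^ 2 := by
        refine mul_le_mul_of_nonneg_left ?_ hA₂
        refine integral_mono hprod.integral_prod_right (hG2.const_mul _) fun y ↦ ?_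
        have e : ∀ x, w₁ x * (k (x - y) * G y ^ 2) = k (y - x) * w₁ x * G y ^ 2 := fun x ↦ by
          rw [← hkneg (y - x), neg_sub]; ring
        simp only [e]
        rw [integral_mul_const]
        exact mul_le_mul_of_nonneg_right (h₁ y) (sq_nonneg _)
    _ = _ := by rw [integral_const_mul, mul_assoc]

/-- A Fourier multiplier with integrable symbol acts as convolution with its kernel. -/
theorem fourier_multiplier_eq_integral_kernel {d : ℕ} {m u : (Fin d → ℝ) → ℂ}
    (hm : Integrable m) (hu : Integrable u) (x : Fin d → ℝ) :
    ∫ ξ : Fin d → ℝ, Complex.exp (Complex.I * ((∑ i, x i * ξ i : ℝ) : ℂ)) * m ξ *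
        ∫ y : Fin d → ℝ, Complex.exp (-Complex.I * ((∑ i, y i * ξ i : ℝ) : ℂ)) * u y =
      ∫ y : Fin d → ℝ, (∫ ξ : Fin d → ℝ,
        Complex.exp (Complex.I * ((∑ i, (x - y) i * ξ i : ℝ) : ℂ)) * m ξ) * u y := by
  have hint : Integrable (Function.uncurry fun ξ y : Fin d → ℝ ↦
      Complex.exp (Complex.I * ((∑ i, (x - y) i * ξ i : ℝ) : ℂ)) * (m ξ * u y))
      (volume.prod volume) :=
    (hm.mul_prod hu).bdd_mul (c := 1)
      (f := fun p : (Fin d → ℝ) × (Fin d → ℝ) ↦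
        Complex.exp (Complex.I * ((∑ i, (x - p.2) i * p.1 i : ℝ) : ℂ)))
      (Continuous.aestronglyMeasurable (by simp only [Pi.sub_apply]; fun_prop))
      (.of_forall fun p ↦ by rw [mul_comm, Complex.norm_exp_ofReal_mul_I])
  have hsplit : ∀ ξ y : Fin d → ℝ, Complex.exp (Complex.I * ((∑ i, x i * ξ i : ℝ) : ℂ)) *
      Complex.exp (-Complex.I * ((∑ i, y i * ξ i : ℝ) : ℂ)) =
      Complex.exp (Complex.I * ((∑ i, (x - y) i * ξ i : ℝ) : ℂ)) := fun ξ y ↦ by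
    rw [← Complex.exp_add]
    congr 1
    simp only [Pi.sub_apply, sub_mul, Finset.sum_sub_distrib, Complex.ofReal_sub]
    ring
  calc _ = ∫ ξ : Fin d → ℝ, ∫ y : Fin d → ℝ,
        Complex.exp (Complex.I * ((∑ i, (x - y) i * ξ i : ℝ) : ℂ)) * (m ξ * u y) := by
        refine integral_congr_ae (.of_forall fun ξ ↦ ?_)
        dsimp only
        rw [← integral_const_mul]
        refine integral_congr_ae (.of_forall fun y ↦ ?_)
        dsimp only
        rw [← hsplit]
        ring
    _ = _ := by
        rw [integral_integral_swap hint]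
        simp only [← mul_assoc, integral_mul_const]

/-- Heat-kernel time-derivative decay: with `P = -div(G*∇)`, `b > 0`, `s₁, s₂ ∈ [0,d/2]`,
`κ > 1`, there is `C ≥ 0` with
`‖⟨x⟩^{-κs₁} P e^{-tP/b} ⟨x⟩^{-κs₂}‖_{L(L²)} ≤ C t^{-1-(s₁+s₂)/2}` for `t ≥ 1`;
`P e^{-tP/b}` is the Fourier multiplier `⟨G*ξ,ξ⟩ e^{-t⟨G*ξ,ξ⟩/b}`, and the operator
bound is expressed by testing against Schwartz functions `g`. -/
theorem stmt10 {d : ℕ} (Gs : Fin d → Fin d → ℝ)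
    (hGsym : ∀ i j, Gs i j = Gs j i)
    (hGpos : ∀ ξ : Fin d → ℝ, ξ ≠ 0 → 0 < ∑ i, ∑ j, Gs i j * ξ i * ξ j)
    (b : ℝ) (hb : 0 < b)
    (s₁ s₂ κ : ℝ) (hs₁ : s₁ ∈ Set.Icc (0 : ℝ) ((d : ℝ) / 2))
    (hs₂ : s₂ ∈ Set.Icc (0 : ℝ) ((d : ℝ) / 2)) (hκ : 1 < κ) :
    ∃ C : ℝ, 0 ≤ C ∧ ∀ t : ℝ, 1 ≤ t → ∀ g : SchwartzMap (Fin d → ℝ) ℂ,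
      Real.sqrt (∫ x : Fin d → ℝ,
          (1 + ∑ i, x i ^ 2) ^ (-(κ * s₁)) *
            ‖((2 * Real.pi) ^ d : ℂ)⁻¹ *
              ∫ ξ : Fin d → ℝ,
                Complex.exp (Complex.I * ((∑ i, x i * ξ i : ℝ) : ℂ)) *
                (((∑ i, ∑ j, Gs i j * ξ i * ξ j : ℝ) : ℂ)) * Complex.exp (-(((t / b) * ∑ i, ∑ j, Gs i j * ξ i * ξ j : ℝ) : ℂ)) *
                ∫ y : Fin d → ℝ,
                  Complex.exp (-Complex.I * ((∑ i, y i * ξ i : ℝ) : ℂ)) *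
                    ((((1 + ∑ i, y i ^ 2) ^ (-(κ * s₂) / 2) : ℝ) : ℂ) * g y)‖ ^ 2)
        ≤ C * t ^ (-1 - (s₁ + s₂) / 2) * Real.sqrt (∫ x : Fin d → ℝ, ‖g x‖ ^ 2) := by
  obtain ⟨B, hB, hq⟩ := exists_matrix_sum_sq_eq Gs hGsym hGpos
  obtain ⟨M, a, hM, ha, hker⟩ := exists_norm_kernel_le hB
  obtain ⟨C₁, hC₁, hw₁⟩ := exists_integral_exp_mul_weight_le ha hs₁ hκ
  obtain ⟨C₂, hC₂, hw₂⟩ := exists_integral_exp_mul_weight_le ha hs₂ hκ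
  simp only [hq]
  set e : ℝ := -1 - (s₁ + s₂) / 2 with he
  set P : ℝ := ‖((2 * Real.pi) ^ d : ℂ)⁻¹‖
  have hP0 : 0 ≤ P := norm_nonneg _
  refine ⟨P * M * √(C₁ * C₂) / b ^ e, by positivity, fun t ht g ↦ ?_⟩
  have ht0 : 0 < t := by linarith
  set c := t / b with hc
  have hc0 : 0 < c := by positivity
  set L : ℝ := P * (M * c ^ (-((d : ℝ) / 2) - 1)) with hL
  have hL0 : 0 ≤ L := by positivity
  have hκ0 : 0 < κ := by linarith
  have hs₁0 : 0 ≤ s₁ := hs₁.1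
  have hs₂0 : 0 ≤ s₂ := hs₂.1
  have hbr : ∀ y : Fin d → ℝ, 1 ≤ 1 + ∑ i, y i ^ 2 := fun y ↦ by
    have : 0 ≤ ∑ i, y i ^ 2 := by positivity
    linarith
  have hcont : ∀ r : ℝ, Continuous fun y : Fin d → ℝ ↦ (1 + ∑ i, y i ^ 2) ^ r := fun r ↦
    Continuous.rpow_const (by fun_prop) fun y ↦ Or.inl (by linarith [hbr y])
  have hle1 : ∀ r : ℝ, 0 ≤ r → ∀ y : Fin d → ℝ, (1 + ∑ i, y i ^ 2) ^ (-r) ≤ 1 := fun r hr y ↦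
    Real.rpow_le_one_of_one_le_of_nonpos (hbr y) (by linarith)
  have hpow : ∀ s : ℝ, L * c ^ ((d : ℝ) / 2 - s) = P * M * c ^ (-1 - s) := fun s ↦ by
    rw [hL, mul_assoc, mul_assoc, ← Real.rpow_add hc0, mul_assoc]
    ring_nf
  have hu : Integrable fun y : Fin d → ℝ ↦
      (((1 + ∑ i, y i ^ 2) ^ (-(κ * s₂) / 2) : ℝ) : ℂ) * g y := by
    refine g.integrable.bdd_mul (c := 1)
      (Complex.continuous_ofReal.comp (hcont _)).aestronglyMeasurable (.of_forall fun y ↦ ?_)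
    rw [Complex.norm_real, Real.norm_of_nonneg (by positivity), neg_div]
    exact hle1 _ (by positivity) y
  have hm : Integrable fun ξ : Fin d → ℝ ↦ ((∑ i, (B.mulVec ξ) i ^ 2 : ℝ) : ℂ) *
      Complex.exp (-((c * ∑ i, (B.mulVec ξ) i ^ 2 : ℝ) : ℂ)) := by
    refine (integrable_sum_mulVec_sq_mul_exp hB hc0).ofReal.congr (.of_forall fun ξ ↦ ?_)
    simp only [← Complex.ofReal_neg, ← Complex.ofReal_exp]
    norm_cast
  have main := integral_weight_mul_sq_norm_le
    (k := fun z : Fin d → ℝ ↦ L * Real.exp (-(a / c * ∑ i, z i ^ 2)))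
    (w₁ := fun x ↦ (1 + ∑ i, x i ^ 2) ^ (-(κ * s₁)))
    (w₂ := fun x ↦ (1 + ∑ i, x i ^ 2) ^ (-(κ * s₂) / 2)) (G := fun y ↦ ‖g y‖)
    (v := fun x ↦ ((2 * Real.pi) ^ d : ℂ)⁻¹ *
      ∫ ξ : Fin d → ℝ, Complex.exp (Complex.I * ((∑ i, x i * ξ i : ℝ) : ℂ)) *
        ((∑ i, (B.mulVec ξ) i ^ 2 : ℝ) : ℂ) *
          Complex.exp (-((c * ∑ i, (B.mulVec ξ) i ^ 2 : ℝ) : ℂ)) *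
        ∫ y : Fin d → ℝ, Complex.exp (-Complex.I * ((∑ i, y i * ξ i : ℝ) : ℂ)) *
          ((((1 + ∑ i, y i ^ 2) ^ (-(κ * s₂) / 2) : ℝ) : ℂ) * g y))
    (A₁ := P * M * C₁ * c ^ (-1 - s₁)) (A₂ := P * M * C₂ * c ^ (-1 - s₂)) (K := L)
    (by fun_prop) (fun z ↦ by positivity)
    (fun z ↦ mul_le_of_le_one_right hL0 (Real.exp_le_one_iff.2 (by
      have : 0 ≤ a / c * ∑ i, z i ^ 2 := by positivity
      linarith)))
    ((integrable_exp_neg_mul_sum_sq (by positivity)).const_mul _)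
    (fun z ↦ by simp) (hcont _) (fun z ↦ by positivity)
    (hle1 _ (by positivity)) (hcont _) (fun z ↦ by positivity)
    (fun z ↦ by
      have := hle1 (κ * s₂ / 2) (by positivity) z
      rwa [← neg_div] at this)
    g.integrable.norm
    ((memLp_two_iff_integrable_sq_norm g.continuous.aestronglyMeasurable).1 (g.memLp 2))
    (by positivity)
    (fun x ↦ by
      simp only [mul_assoc, integral_const_mul]
      calc _ ≤ L * (C₁ * c ^ ((d : ℝ) / 2 - s₁)) := mul_le_mul_of_nonneg_left (hw₁ c hc0 x) hL0
        _ = C₁ * (L * c ^ ((d : ℝ) / 2 - s₁)) := by ring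
        _ = _ := by rw [hpow]; ring)
    (fun x ↦ by
      have hsq : ∀ y : Fin d → ℝ, ((1 + ∑ i, y i ^ 2) ^ (-(κ * s₂) / 2)) ^ 2 =
          (1 + ∑ i, y i ^ 2) ^ (-(κ * s₂)) := fun y ↦ by
        rw [← Real.rpow_natCast, ← Real.rpow_mul (by linarith [hbr y])]
        congr 1
        push_cast
        ring
      simp only [mul_assoc, integral_const_mul, hsq]
      calc _ ≤ L * (C₂ * c ^ ((d : ℝ) / 2 - s₂)) := mul_le_mul_of_nonneg_left (hw₂ c hc0 x) hL0
        _ = C₂ * (L * c ^ ((d : ℝ) / 2 - s₂)) := by ring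
        _ = _ := by rw [hpow]; ring)
    (fun x ↦ by
      have h := fourier_multiplier_eq_integral_kernel hm hu x
      simp only [← mul_assoc _ (((∑ i, _ : ℝ) : ℂ))] at h
      rw [h, ← integral_const_mul]
      refine norm_integral_le_of_norm_le ?_ (.of_forall fun y ↦ ?_)
      · refine (hu.norm.bdd_mul (c := L)
          (f := fun y ↦ L * Real.exp (-(a / c * ∑ i, (x - y) i ^ 2)))
          (Continuous.aestronglyMeasurable (by simp only [Pi.sub_apply]; fun_prop))
          (.of_forall fun y ↦ ?_)).congr (.of_forall fun y ↦ ?_)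
        · rw [Real.norm_of_nonneg (by positivity)]
          refine mul_le_of_le_one_right hL0 (Real.exp_le_one_iff.2 ?_)
          have : 0 ≤ a / c * ∑ i, (x - y) i ^ 2 := by positivity
          linarith
        · dsimp only
          rw [norm_mul, Complex.norm_real, Real.norm_of_nonneg (by positivity)]
      · rw [norm_mul, norm_mul, norm_mul, Complex.norm_real,
          Real.norm_of_nonneg (by positivity : 0 ≤ (1 + ∑ i, y i ^ 2) ^ (-(κ * s₂) / 2)),
          ← mul_assoc]
        refine mul_le_mul_of_nonneg_right ?_ (by positivity)
        rw [hL, mul_assoc P]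
        exact mul_le_mul_of_nonneg_left (hker c hc0 (x - y)) hP0)
  refine (Real.sqrt_le_sqrt main).trans_eq ?_
  have hc2 : c ^ (-1 - s₂) * c ^ (-1 - s₁) = (c ^ e) ^ 2 := by
    rw [← Real.rpow_add hc0, ← Real.rpow_natCast, ← Real.rpow_mul hc0.le, he]
    congr 1
    push_cast
    ring
  have hA : P * M * C₂ * c ^ (-1 - s₂) * (P * M * C₁ * c ^ (-1 - s₁)) =
      (P * M * c ^ e) ^ 2 * (C₁ * C₂) := by
    rw [mul_pow, ← hc2]
    ring
  rw [hA, Real.sqrt_mul (by positivity), Real.sqrt_mul (by positivity),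
    Real.sqrt_sq (by positivity), hc, Real.div_rpow ht0.le hb.le]
  ring
end
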